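/- Fix μ ∈ (1,2) and define f : ℝ → ℝ by f(z) = ((μ−1)/(2μ)) z² if |z| ≤ 1, and f(z) = |z| − (1/(μ(2−μ)))|z|^{2−μ} + (μ−1)/(2(2−μ)) if |z| > 1. Then f is twice continuously differentiable on ℝ, with f'(z) = ((μ−1)/μ) z for |z| ≤ 1 and f'(z) = z/|z| − z/(μ|z|^μ) for |z| > 1, and with f''(z) = (μ−1)/μ for |z| ≤ 1 and f''(z) = ((μ−1)/μ)|z|^{−μ} for |z| > 1. -/

import Mathlib

/-!
The integrand and its first derivative are both of the form `if |z| ≤ 1 then a z else b z`, where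
`a` and `b` agree to first order at `|z| = 1`, so each can be differentiated branch by branch.
Writing `z / |z| = z * |z| ^ (-1)`, the outer branches become combinations of `|z| ^ p` and
`z * |z| ^ p`, whose derivatives away from `0` are `p * |z| ^ (p - 2) * z` and
`(p + 1) * |z| ^ p`.
-/

/-- The model integrand of the one-dimensional counterexample. -/
noncomputable def modelF (μ : ℝ) (z : ℝ) : ℝ :=
  if |z| ≤ 1 then ((μ - 1) / (2 * μ)) * z ^ 2
  else |z| - (1 / (μ * (2 - μ))) * |z| ^ (2 - μ) + (μ - 1) / (2 * (2 - μ))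

section Gluing

variable {𝕜 E α : Type*} [NontriviallyNormedField 𝕜] [NormedAddCommGroup E] [NormedSpace 𝕜 E]
  [TopologicalSpace α] [LinearOrder α] [OrderClosedTopology α]

theorem hasDerivAt_ite_le {p q : 𝕜 → α} {f g : 𝕜 → E} {f' g' : E} {x : 𝕜}
    (hp : ContinuousAt p x) (hq : ContinuousAt q x)
    (hf : p x ≤ q x → HasDerivAt f f' x) (hg : q x ≤ p x → HasDerivAt g g' x)
    (hfg : p x = q x → f x = g x) (hfg' : p x = q x → f' = g') :
    HasDerivAt (fun y ↦ if p y ≤ q y then f y else g y) (if p x ≤ q x then f' else g') x := by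
  rcases lt_trichotomy (p x) (q x) with hlt | heq | hgt
  · rw [if_pos hlt.le]
    refine (hf hlt.le).congr_of_eventuallyEq ?_
    filter_upwards [hp.eventually_lt hq hlt] with y hy using if_pos hy.le
  · rw [if_pos heq.le]
    have inner : HasDerivWithinAt (fun y ↦ if p y ≤ q y then f y else g y) f' {y | p y ≤ q y} x :=
      (hf heq.le).hasDerivWithinAt.congr (fun _ hy ↦ if_pos hy) (if_pos heq.le)
    have outer :
        HasDerivWithinAt (fun y ↦ if p y ≤ q y then f y else g y) f' {y | p y ≤ q y}ᶜ x := by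
      rw [hfg' heq]
      exact (hg heq.ge).hasDerivWithinAt.congr (fun _ hy ↦ if_neg hy)
        ((if_pos heq.le).trans (hfg heq))
    simpa only [Set.union_compl_self, hasDerivWithinAt_univ] using inner.union outer
  · rw [if_neg hgt.not_ge]
    refine (hg hgt.le).congr_of_eventuallyEq ?_
    filter_upwards [hq.eventually_lt hp hgt] with y hy using if_neg hy.not_ge

end Gluing

theorem contDiff_two_of_hasDerivAt {𝕜 E : Type*} [NontriviallyNormedField 𝕜]
    [NormedAddCommGroup E] [NormedSpace 𝕜 E] {f f' f'' : 𝕜 → E}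
    (hf : ∀ x, HasDerivAt f (f' x) x) (hf' : ∀ x, HasDerivAt f' (f'' x) x)
    (hf'' : Continuous f'') : ContDiff 𝕜 2 f := by
  have deriv_f : deriv f = f' := funext fun x ↦ (hf x).deriv
  have deriv_f' : deriv f' = f'' := funext fun x ↦ (hf' x).deriv
  have contDiff_f' : ContDiff 𝕜 1 f' :=
    contDiff_one_iff_deriv.2 ⟨fun x ↦ (hf' x).differentiableAt, deriv_f' ▸ hf''⟩
  rw [← one_add_one_eq_two, contDiff_succ_iff_deriv, deriv_f]
  exact ⟨fun x ↦ (hf x).differentiableAt, by simp, contDiff_f'⟩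

theorem ne_zero_of_one_le_abs {R : Type*} [Ring R] [LinearOrder R] [IsStrictOrderedRing R] {a : R}
    (ha : 1 ≤ |a|) : a ≠ 0 :=
  abs_pos.1 (zero_lt_one.trans_le ha)

theorem hasDerivAt_abs_rpow_of_ne_zero {x : ℝ} (hx : x ≠ 0) (p : ℝ) :
    HasDerivAt (fun y : ℝ ↦ |y| ^ p) (p * |x| ^ (p - 2) * x) x := by
  have habs : |x| ≠ 0 := abs_ne_zero.2 hx
  refine ((hasDerivAt_abs hx).rpow_const (Or.inl habs)).congr_deriv ?_
  calc (SignType.sign x : ℝ) * p * |x| ^ (p - 1)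
      = p * |x| ^ (p - 2) * (SignType.sign x * |x|) := by
        rw [show p - 1 = p - 2 + 1 by ring, Real.rpow_add_one habs]; ring
    _ = p * |x| ^ (p - 2) * x := by rw [sign_mul_abs]

theorem hasDerivAt_mul_abs_rpow {x : ℝ} (hx : x ≠ 0) (p : ℝ) :
    HasDerivAt (fun y : ℝ ↦ y * |y| ^ p) ((p + 1) * |x| ^ p) x := by
  have sq_mul_rpow : x ^ 2 * |x| ^ (p - 2) = |x| ^ p := by
    rw [← sq_abs, ← Real.rpow_two, ← Real.rpow_add (abs_pos.2 hx), add_sub_cancel]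
  refine ((hasDerivAt_id' x).mul (hasDerivAt_abs_rpow_of_ne_zero hx p)).congr_deriv ?_
  linear_combination p * sq_mul_rpow

theorem div_abs_sub_div_mul_abs_rpow (μ z : ℝ) :
    z / |z| - z / (μ * |z| ^ μ) = z * |z| ^ (-1 : ℝ) - μ⁻¹ * (z * |z| ^ (-μ)) := by
  rw [Real.rpow_neg_one, Real.rpow_neg (abs_nonneg z), div_eq_mul_inv, div_eq_mul_inv, mul_inv]
  ring

/-- The first derivative of `modelF μ`; see `hasDerivAt_modelF`. -/
noncomputable def modelFDeriv (μ z : ℝ) : ℝ :=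
  if |z| ≤ 1 then ((μ - 1) / μ) * z else z / |z| - z / (μ * |z| ^ μ)

/-- The second derivative of `modelF μ`; see `hasDerivAt_modelFDeriv`. -/
noncomputable def modelFSecondDeriv (μ z : ℝ) : ℝ :=
  if |z| ≤ 1 then (μ - 1) / μ else ((μ - 1) / μ) * |z| ^ (-μ)

section ModelF

variable {μ : ℝ}

theorem hasDerivAt_modelF_outer {z : ℝ} (hμ2 : μ ≠ 2) (hz : z ≠ 0) :
    HasDerivAt
      (fun y ↦ |y| - (1 / (μ * (2 - μ))) * |y| ^ (2 - μ) + (μ - 1) / (2 * (2 - μ)))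
      (z / |z| - z / (μ * |z| ^ μ)) z := by
  have h2μ : 2 - μ ≠ 0 := sub_ne_zero.2 hμ2.symm
  have habs : HasDerivAt (fun y : ℝ ↦ |y|) (z * |z| ^ (-1 : ℝ)) z := by
    convert hasDerivAt_abs_rpow_of_ne_zero hz 1 using 1
    · simp only [Real.rpow_one]
    · norm_num [mul_comm]
  have hrpow : HasDerivAt (fun y : ℝ ↦ |y| ^ (2 - μ)) ((2 - μ) * (z * |z| ^ (-μ))) z := by
    convert hasDerivAt_abs_rpow_of_ne_zero hz (2 - μ) using 1
    rw [sub_sub_cancel_left]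
    ring
  refine ((habs.sub (hrpow.const_mul _)).add_const _).congr_deriv ?_
  rw [div_abs_sub_div_mul_abs_rpow]
  field_simp

theorem hasDerivAt_modelFDeriv_outer {z : ℝ} (hμ0 : μ ≠ 0) (hz : z ≠ 0) :
    HasDerivAt (fun y ↦ y / |y| - y / (μ * |y| ^ μ)) (((μ - 1) / μ) * |z| ^ (-μ)) z := by
  simp only [div_abs_sub_div_mul_abs_rpow]
  refine ((hasDerivAt_mul_abs_rpow hz (-1)).sub
    ((hasDerivAt_mul_abs_rpow hz (-μ)).const_mul μ⁻¹)).congr_deriv ?_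
  field_simp
  ring

theorem hasDerivAt_modelF (hμ0 : μ ≠ 0) (hμ2 : μ ≠ 2) (z : ℝ) :
    HasDerivAt (modelF μ) (modelFDeriv μ z) z := by
  have h2μ : 2 - μ ≠ 0 := sub_ne_zero.2 hμ2.symm
  refine hasDerivAt_ite_le continuous_abs.continuousAt continuousAt_const (fun _ ↦ ?_)
    (fun hz ↦ hasDerivAt_modelF_outer hμ2 (ne_zero_of_one_le_abs hz)) (fun hz ↦ ?_) (fun hz ↦ ?_)
  · refine ((hasDerivAt_pow 2 z).const_mul ((μ - 1) / (2 * μ))).congr_deriv ?_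
    field_simp
    norm_num
  · rw [← sq_abs, hz, Real.one_rpow]
    field_simp
    ring
  · rw [hz, Real.one_rpow]
    field_simp

theorem hasDerivAt_modelFDeriv (hμ0 : μ ≠ 0) (z : ℝ) :
    HasDerivAt (modelFDeriv μ) (modelFSecondDeriv μ z) z := by
  refine hasDerivAt_ite_le continuous_abs.continuousAt continuousAt_const
    (fun _ ↦ hasDerivAt_const_mul _)
    (fun hz ↦ hasDerivAt_modelFDeriv_outer hμ0 (ne_zero_of_one_le_abs hz))
    (fun hz ↦ ?_) (fun hz ↦ ?_)
  · rw [hz, Real.one_rpow]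
    field_simp
  · rw [hz, Real.one_rpow, mul_one]

theorem continuous_modelFSecondDeriv (μ : ℝ) : Continuous (modelFSecondDeriv μ) := by
  refine continuous_if_le continuous_abs continuous_const continuousOn_const ?_ (fun z hz ↦ ?_)
  · exact continuousOn_const.mul (continuous_abs.continuousOn.rpow_const fun z hz ↦
      Or.inl (abs_ne_zero.2 (ne_zero_of_one_le_abs hz)))
  · rw [hz, Real.one_rpow, mul_one]

end ModelF

theorem modelF_c2_with_derivs_general {μ : ℝ} (hμ0 : μ ≠ 0) (hμ2 : μ ≠ 2) :
    ContDiff ℝ 2 (modelF μ) ∧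
    (∀ z : ℝ, deriv (modelF μ) z =
      if |z| ≤ 1 then ((μ - 1) / μ) * z else z / |z| - z / (μ * |z| ^ μ)) ∧
    (∀ z : ℝ, deriv (deriv (modelF μ)) z =
      if |z| ≤ 1 then (μ - 1) / μ else ((μ - 1) / μ) * |z| ^ (-μ)) := by
  have first (z : ℝ) := hasDerivAt_modelF hμ0 hμ2 z
  have second (z : ℝ) := hasDerivAt_modelFDeriv hμ0 z
  have deriv_modelF : deriv (modelF μ) = modelFDeriv μ := funext fun z ↦ (first z).deriv
  refine ⟨contDiff_two_of_hasDerivAt first second (continuous_modelFSecondDeriv μ),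
    fun z ↦ (first z).deriv, fun z ↦ ?_⟩
  rw [deriv_modelF]
  exact (second z).deriv

/-- For `μ ∈ (1,2)` the model integrand `f` is of class `C²` with the stated first and
second derivatives. -/
theorem modelF_c2_with_derivs (μ : ℝ) (hμ : μ ∈ Set.Ioo (1:ℝ) 2) :
    ContDiff ℝ 2 (modelF μ) ∧
    (∀ z : ℝ, deriv (modelF μ) z =
      if |z| ≤ 1 then ((μ - 1) / μ) * z else z / |z| - z / (μ * |z| ^ μ)) ∧
    (∀ z : ℝ, deriv (deriv (modelF μ)) z =
      if |z| ≤ 1 then (μ - 1) / μ else ((μ - 1) / μ) * |z| ^ (-μ)) := by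
  exact modelF_c2_with_derivs_general (zero_lt_one.trans hμ.1).ne' hμ.2.ne
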